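/- Let H ⊂ ℝⁿ be a Hanner polytope and H° its polar. Then every simple classical closed billiard trajectory in H with geometry given by H° (1) has length 4 measured in the norm ‖q‖_{H°} = max_{p∈H°}⟨p,q⟩, (2) bounces exactly 2n times (is 2n-periodic), and (3) is centrally symmetric with respect to the origin, with centrally symmetric momentum trajectory: q_i = −q_{i+n} and p_i = −p_{i+n} for all i (indices mod 2n). -/

import Mathlib

open MeasureTheory
open scoped Pointwise

namespace Billiard

/-- The canonical pairing `⟨p, q⟩ = ∑ i, p i * q i` on `ℝⁿ`. -/
noncomputable def pairing {n : ℕ} (p q : Fin n → ℝ) : ℝ := ∑ i, p i * q i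

/-- The polar set `H° = {p : ⟨p, q⟩ ≤ 1 for all q ∈ H}`. -/
def polarSet {n : ℕ} (H : Set (Fin n → ℝ)) : Set (Fin n → ℝ) :=
  {p | ∀ q ∈ H, pairing p q ≤ 1}

/-- The support function of `T`, i.e. the norm `‖v‖_{T} = max_{p ∈ T} ⟨p, v⟩`. -/
noncomputable def suppFn {n : ℕ} (T : Set (Fin n → ℝ)) (v : Fin n → ℝ) : ℝ :=
  sSup ((fun p => pairing p v) '' T)

/-- Projection of `ℝ^{k+l}` onto the first `k` coordinates. -/
def splitL {k l : ℕ} (x : Fin (k + l) → ℝ) : Fin k → ℝ := fun i => x (Fin.castAdd l i)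

/-- Projection of `ℝ^{k+l}` onto the last `l` coordinates. -/
def splitR {k l : ℕ} (x : Fin (k + l) → ℝ) : Fin l → ℝ := fun j => x (Fin.natAdd k j)

/-- `K ⊕_∞ L = K × L ⊂ ℝ^{k+l}`. -/
def sumInfty {k l : ℕ} (K : Set (Fin k → ℝ)) (L : Set (Fin l → ℝ)) :
    Set (Fin (k + l) → ℝ) :=
  {x | splitL x ∈ K ∧ splitR x ∈ L}

/-- `K ⊕₁ L = conv((K × {0}) ∪ ({0} × L)) ⊂ ℝ^{k+l}`. -/
def sumOne {k l : ℕ} (K : Set (Fin k → ℝ)) (L : Set (Fin l → ℝ)) :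
    Set (Fin (k + l) → ℝ) :=
  convexHull ℝ ({x | splitL x ∈ K ∧ splitR x = 0} ∪ {x | splitL x = 0 ∧ splitR x ∈ L})

/-- Hanner polytopes, defined inductively: the segment `[-1,1] ⊂ ℝ` is a Hanner polytope,
and `K ⊕_∞ L`, `K ⊕₁ L` are Hanner polytopes whenever `K`, `L` are. -/
inductive IsHanner : ∀ n : ℕ, Set (Fin n → ℝ) → Prop
  | segment : IsHanner 1 {x | |x 0| ≤ 1}
  | inftySum {k l : ℕ} {K : Set (Fin k → ℝ)} {L : Set (Fin l → ℝ)} :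
      IsHanner k K → IsHanner l L → IsHanner (k + l) (sumInfty K L)
  | oneSum {k l : ℕ} {K : Set (Fin k → ℝ)} {L : Set (Fin l → ℝ)} :
      IsHanner k K → IsHanner l L → IsHanner (k + l) (sumOne K L)

/-- `u` is the outer normal of the facet of `H` containing `q`, normalized to lie in `∂H°`:
`u ∈ H°`, `⟨u, q⟩ = 1`, and `u` is the unique such vector. The uniqueness encodes that `q`
lies in the relative interior of a facet of the polytope `H`. -/
def IsUniqueNormal {n : ℕ} (H : Set (Fin n → ℝ)) (q u : Fin n → ℝ) : Prop :=
  u ∈ polarSet H ∧ pairing u q = 1 ∧ ∀ v ∈ polarSet H, pairing v q = 1 → v = u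

/-- A classical closed billiard trajectory in the configuration `H × T` (with `T = H°`):
closed `m`-periodic sequences of coordinates `q i ∈ ∂H` and momenta `p i ∈ ∂T`, each in
the relative interior of a facet (encoded by uniqueness of the normalized outer normal),
satisfying the reflection rule `p (i+1) − p i = −λ i • n_H(q i)` with `λ i > 0` and the
motion rule `q (i+1) − q i = μ i • n_T(p (i+1))` with `μ i > 0`. -/
structure ClassicalTraj (n : ℕ) (H T : Set (Fin n → ℝ)) where
  m : ℕ
  m_pos : 0 < m
  q : ℕ → Fin n → ℝ
  p : ℕ → Fin n → ℝ
  nq : ℕ → Fin n → ℝ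
  np : ℕ → Fin n → ℝ
  lam : ℕ → ℝ
  mu : ℕ → ℝ
  q_mem : ∀ i, q i ∈ frontier H
  p_mem : ∀ i, p i ∈ frontier T
  q_periodic : ∀ i, q (i + m) = q i
  p_periodic : ∀ i, p (i + m) = p i
  nq_spec : ∀ i, IsUniqueNormal H (q i) (nq i)
  np_spec : ∀ i, IsUniqueNormal T (p i) (np i)
  lam_pos : ∀ i, 0 < lam i
  mu_pos : ∀ i, 0 < mu i
  reflection : ∀ i, p (i + 1) - p i = (-(lam i)) • nq i
  motion : ∀ i, q (i + 1) - q i = mu i • np (i + 1)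

/-- A trajectory is simple if it does not traverse the same closed route more than once,
i.e. it has no period smaller than `m`. -/
def ClassicalTraj.IsSimple {n : ℕ} {H T : Set (Fin n → ℝ)}
    (τ : ClassicalTraj n H T) : Prop :=
  ∀ d : ℕ, 0 < d → d < τ.m → ¬(∀ i, τ.q (i + d) = τ.q i ∧ τ.p (i + d) = τ.p i)

/-- The length of the trajectory, measured in the norm `‖·‖_T` with `T = H°`. -/
noncomputable def ClassicalTraj.length {n : ℕ} {H T : Set (Fin n → ℝ)}
    (τ : ClassicalTraj n H T) : ℝ :=
  ∑ i ∈ Finset.range τ.m, suppFn T (τ.q (i + 1) - τ.q i)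

/-- The trace of a trajectory in phase space `∂H × ∂T`: the union of the segments swept by
the coordinate while the momentum is constant, and by the momentum while the coordinate is
constant. -/
noncomputable def ClassicalTraj.trace {n : ℕ} {H T : Set (Fin n → ℝ)}
    (τ : ClassicalTraj n H T) : Set ((Fin n → ℝ) × (Fin n → ℝ)) :=
  ⋃ i ∈ Finset.range τ.m,
    ((fun x => (x, τ.p (i + 1))) '' segment ℝ (τ.q i) (τ.q (i + 1)) ∪
      (fun y => (τ.q i, y)) '' segment ℝ (τ.p i) (τ.p (i + 1)))

/-- The coordinate polygonal line of a trajectory, as a subset of `∂H`. -/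
noncomputable def ClassicalTraj.coordTrace {n : ℕ} {H T : Set (Fin n → ℝ)}
    (τ : ClassicalTraj n H T) : Set (Fin n → ℝ) :=
  ⋃ i ∈ Finset.range τ.m, segment ℝ (τ.q i) (τ.q (i + 1))

/-- The momentum polygonal line of a trajectory, as a subset of `∂T`. -/
noncomputable def ClassicalTraj.momTrace {n : ℕ} {H T : Set (Fin n → ℝ)}
    (τ : ClassicalTraj n H T) : Set (Fin n → ℝ) :=
  ⋃ i ∈ Finset.range τ.m, segment ℝ (τ.p i) (τ.p (i + 1))

end Billiard

/-!
Traverse a trajectory at the unit speed of the norm `‖·‖_{H°}`, so that its length is the time it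
takes to close up. By induction on the Hanner polytope, after time `2` and exactly `n` bounces every
trajectory is at its antipode, in position and in momentum, and it cannot close up before time `4`.
A simple trajectory therefore closes up precisely after time `4`, with `2n` bounces.

In a product `K × L` a facet normal of `K × L` belongs to one factor, hence each bounce changes only
one of the two components of the momentum. The two components of the trajectory, with momenta
rescaled by constants, are trajectories in `K` and `L` on the same clock, each with some of its
indices idle; time `2` is a half-period of both, and the numbers of bounces add up.

Exchanging positions and momenta, on the clock shifted by `⟨p, q⟩`, turns trajectories in `H × H°`
into trajectories in `H° × H`. As `K ⊕₁ L` is the polar of `K° × L°`, this reduces the `ℓ₁`-sum to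
the product. In the segment a trajectory just alternates between the two end points.
-/

namespace Billiard

open Matrix

/-! ### Polar pairs and normals -/

section Normal

variable {ι : Type*} [Fintype ι]

/-- `u` is the only vector of `T` whose pairing with `q` equals `1`. For `T = H°` this is
`IsUniqueNormal H q u`; not mentioning `H` makes the notion symmetric in configuration and
momentum space. -/
def IsNormal (T : Set (ι → ℝ)) (q u : ι → ℝ) : Prop :=
  u ∈ T ∧ u ⬝ᵥ q = 1 ∧ ∀ v ∈ T, v ⬝ᵥ q = 1 → v = u

theorem IsNormal.unique {T : Set (ι → ℝ)} {q u v : ι → ℝ} (hu : IsNormal T q u)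
    (hv : IsNormal T q v) : u = v :=
  hv.2.2 u hu.1 hu.2.1

theorem IsNormal.neg {T : Set (ι → ℝ)} {q u : ι → ℝ} (hT : ∀ v ∈ T, -v ∈ T)
    (hu : IsNormal T q u) : IsNormal T (-q) (-u) := by
  refine ⟨hT u hu.1, by rw [neg_dotProduct_neg, hu.2.1], fun v hv hvq => ?_⟩
  rw [← hu.2.2 (-v) (hT v hv) (by rwa [neg_dotProduct, ← dotProduct_neg]), neg_neg]

end Normal

/-- `H` and `T` are subsets of a nontrivial space which are polar to each other, centrally
symmetric, and contain the standard basis; each of them is then contained in the cube `[-1, 1]^ι`,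
which replaces boundedness and interior points of `H` and `T`. -/
structure PolarPair {ι : Type*} [Fintype ι] [DecidableEq ι] (H T : Set (ι → ℝ)) : Prop where
  nonempty : Nonempty ι
  mem_right : ∀ p, p ∈ T ↔ ∀ q ∈ H, p ⬝ᵥ q ≤ 1
  mem_left : ∀ q, q ∈ H ↔ ∀ p ∈ T, p ⬝ᵥ q ≤ 1
  neg_left : ∀ q ∈ H, -q ∈ H
  single_left : ∀ i, Pi.single i 1 ∈ H
  single_right : ∀ i, Pi.single i 1 ∈ T

namespace PolarPair

variable {ι : Type*} [Fintype ι] [DecidableEq ι] {H T : Set (ι → ℝ)}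

theorem neg_right (h : PolarPair H T) : ∀ p ∈ T, -p ∈ T := by
  intro p hp
  rw [h.mem_right] at hp ⊢
  intro q hq
  simpa using hp (-q) (h.neg_left q hq)

theorem symm (h : PolarPair H T) : PolarPair T H where
  nonempty := h.nonempty
  mem_right p := by simpa only [dotProduct_comm] using h.mem_left p
  mem_left p := by simpa only [dotProduct_comm] using h.mem_right p
  neg_left := h.neg_right
  single_left := h.single_right
  single_right := h.single_left

theorem dotProduct_le_one (h : PolarPair H T) {p q : ι → ℝ} (hp : p ∈ T) (hq : q ∈ H) :
    p ⬝ᵥ q ≤ 1 :=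
  (h.mem_left q).1 hq p hp

theorem zero_left (h : PolarPair H T) : 0 ∈ H :=
  (h.mem_left 0).2 (by simp)

theorem abs_apply_le_one (h : PolarPair H T) {q : ι → ℝ} (hq : q ∈ H) (i : ι) : |q i| ≤ 1 := by
  have h1 := h.dotProduct_le_one (h.single_right i) hq
  have h2 := h.dotProduct_le_one (h.neg_right _ (h.single_right i)) hq
  rw [single_one_dotProduct] at h1
  rw [neg_dotProduct, single_one_dotProduct] at h2
  exact abs_le.2 ⟨by linarith, h1⟩

theorem mem_smul_of_forall_dotProduct_le (h : PolarPair H T) {p : ι → ℝ} {c : ℝ} (hc : 0 ≤ c)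
    (hp : ∀ q ∈ H, p ⬝ᵥ q ≤ c) : p ∈ c • T := by
  rcases hc.eq_or_lt with rfl | hc
  · refine ⟨0, h.symm.zero_left, ?_⟩
    ext i
    have h1 := hp _ (h.single_left i)
    have h2 := hp _ (h.neg_left _ (h.single_left i))
    rw [dotProduct_single_one] at h1
    rw [dotProduct_neg, dotProduct_single_one] at h2
    simp only [smul_zero, Pi.zero_apply]
    linarith
  · rw [Set.mem_smul_set_iff_inv_smul_mem₀ hc.ne', h.mem_right]
    intro q hq
    rw [smul_dotProduct, smul_eq_mul, inv_mul_le_one₀ hc]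
    exact hp q hq

theorem isClosed_left (h : PolarPair H T) : IsClosed H := by
  have hH : H = ⋂ p ∈ T, {q | p ⬝ᵥ q ≤ 1} := by
    ext q
    simpa using h.mem_left q
  rw [hH]
  exact isClosed_biInter fun p _ =>
    isClosed_le (continuous_const.dotProduct continuous_id) continuous_const

end PolarPair

/-! ### Billiard paths on a clock -/

/-- The momentum changes at the index `i`. -/
def Bounces {ι : Type*} (p : ℕ → ι → ℝ) (i : ℕ) : Prop := p (i + 1) ≠ p i

theorem bounces_smul {ι : Type*} {p : ℕ → ι → ℝ} {r : ℝ} (hr : r ≠ 0) (i : ℕ) :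
    Bounces (fun i => r • p i) i ↔ Bounces p i :=
  (smul_right_injective (ι → ℝ) hr).ne_iff

/-- `m`-periodic sequences of positions `q i`, reached at time `t i`, and of momenta `p i` which
obey the reflection and motion rules of `H × T`. Contrary to a classical trajectory the momentum
may stay constant at some indices, so that the two components of a trajectory in a product, which
bounce at different times, are again paths with the same time stamps. -/
structure IsBilliardPath {ι : Type*} [Fintype ι] (H T : Set (ι → ℝ)) (m : ℕ) (t : ℕ → ℝ)
    (q p : ℕ → ι → ℝ) : Prop where
  period_pos : 0 < m
  q_mem : ∀ i, q i ∈ H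
  p_mem : ∀ i, p i ∈ T
  q_periodic : ∀ i, q (i + m) = q i
  p_periodic : ∀ i, p (i + m) = p i
  time_strictMono : StrictMono t
  reflection : ∀ i, Bounces p i → ∃ c > (0 : ℝ), ∃ u, IsNormal T (q i) u ∧
    p (i + 1) = p i - c • u
  motion : ∀ i, ∃ w, IsNormal H (p (i + 1)) w ∧ q (i + 1) = q i + (t (i + 1) - t i) • w

namespace IsBilliardPath

variable {ι : Type*} [Fintype ι] {H T : Set (ι → ℝ)} {m : ℕ} {t : ℕ → ℝ} {q p : ℕ → ι → ℝ}

theorem exists_normal (h : IsBilliardPath H T m t q p) (i : ℕ) : ∃ w, IsNormal H (p i) w := by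
  obtain ⟨w, hw, -⟩ := h.motion (i + m - 1)
  rw [Nat.sub_add_cancel (by linarith [h.period_pos]), h.p_periodic] at hw
  exact ⟨w, hw⟩

theorem eq_add_smul (h : IsBilliardPath H T m t q p) {i : ℕ} {w : ι → ℝ}
    (hw : IsNormal H (p (i + 1)) w) : q (i + 1) = q i + (t (i + 1) - t i) • w := by
  obtain ⟨w', hw', hq⟩ := h.motion i
  rwa [hw.unique hw']

theorem time_sub (h : IsBilliardPath H T m t q p) (i : ℕ) :
    t (i + 1) - t i = (q (i + 1) - q i) ⬝ᵥ p (i + 1) := by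
  obtain ⟨w, hw, hq⟩ := h.motion i
  rw [hq, add_sub_cancel_left, smul_dotProduct, hw.2.1, smul_eq_mul, mul_one]

theorem time_add_period (h : IsBilliardPath H T m t q p) (i : ℕ) :
    t (i + m) = t i + (t m - t 0) := by
  induction i with
  | zero => rw [zero_add, add_sub_cancel]
  | succ i ih =>
    have hi := h.time_sub i
    have him := h.time_sub (i + m)
    rw [add_right_comm, h.q_periodic, h.q_periodic, h.p_periodic] at him
    linarith

theorem eq_of_forall_not_bounces (h : IsBilliardPath H T m t q p) {i j : ℕ} (hij : i ≤ j)
    (hb : ∀ k, i ≤ k → k < j → ¬ Bounces p k) {w : ι → ℝ} (hw : IsNormal H (p j) w) :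
    p j = p i ∧ q j = q i + (t j - t i) • w := by
  induction j, hij using Nat.le_induction with
  | base => simp
  | succ j hij ih =>
    have hpj : p (j + 1) = p j := not_not.1 (hb j hij j.lt_succ_self)
    obtain ⟨hp, hq⟩ := ih (fun k hik hkj => hb k hik (hkj.trans j.lt_succ_self)) (hpj ▸ hw)
    refine ⟨hpj.trans hp, ?_⟩
    rw [h.eq_add_smul hw, hq, add_assoc, ← add_smul, sub_add_sub_cancel']

theorem exists_bounce (h : IsBilliardPath H T m t q p) : ∃ i, Bounces p i := by
  by_contra! hb
  obtain ⟨w, hw⟩ := h.exists_normal m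
  have hq := (h.eq_of_forall_not_bounces m.zero_le (fun k _ _ => hb k) hw).2
  rw [← zero_add m, h.q_periodic, zero_add, left_eq_add, smul_eq_zero] at hq
  rcases hq with ht | rfl
  · exact (h.time_strictMono h.period_pos).ne' (sub_eq_zero.1 ht)
  · simpa using hw.2.1

theorem bounces_add_period (h : IsBilliardPath H T m t q p) (i : ℕ) :
    Bounces p (i + m) ↔ Bounces p i := by
  rw [Bounces, Bounces, add_right_comm, h.p_periodic, h.p_periodic]

theorem infinite_bounces (h : IsBilliardPath H T m t q p) : (Set.ofPred (Bounces p)).Infinite := by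
  obtain ⟨i, hi⟩ := h.exists_bounce
  have hb (j : ℕ) : Bounces p (i + j * m) := by
    induction j with
    | zero => simpa using hi
    | succ j ih => rwa [add_one_mul, ← add_assoc, h.bounces_add_period]
  exact Set.infinite_of_forall_exists_gt fun N =>
    ⟨i + (N + 1) * m, hb _, by nlinarith [h.period_pos]⟩

section Thinning

variable [DecidablePred (Bounces p)]

theorem count_add_period (h : IsBilliardPath H T m t q p) (i : ℕ) :
    Nat.count (Bounces p) (i + m) = Nat.count (Bounces p) i + Nat.count (Bounces p) m := by
  rw [Nat.count_add']
  simp only [h.bounces_add_period]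

theorem nth_add_count_period (h : IsBilliardPath H T m t q p) (j : ℕ) :
    Nat.nth (Bounces p) (j + Nat.count (Bounces p) m) = Nat.nth (Bounces p) j + m := by
  have hb := Nat.nth_mem_of_infinite h.infinite_bounces j
  rw [← Nat.nth_count ((h.bounces_add_period _).2 hb), h.count_add_period,
    Nat.count_nth_of_infinite h.infinite_bounces]

theorem count_period_pos (h : IsBilliardPath H T m t q p) : 0 < Nat.count (Bounces p) m := by
  refine Nat.pos_of_ne_zero fun h0 => h.period_pos.ne' ?_
  simpa [h0] using h.nth_add_count_period 0

theorem not_bounces_of_lt_nth_count (h : IsBilliardPath H T m t q p) {i k : ℕ} (hik : i ≤ k)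
    (hk : k < Nat.nth (Bounces p) (Nat.count (Bounces p) i)) : ¬ Bounces p k := fun hb => by
  rw [← Nat.nth_count hb, Nat.nth_lt_nth h.infinite_bounces] at hk
  exact hk.not_ge (Nat.count_monotone _ hik)

end Thinning

theorem eq_nth_succ (h : IsBilliardPath H T m t q p) (j : ℕ) {w : ι → ℝ}
    (hw : IsNormal H (p (Nat.nth (Bounces p) (j + 1))) w) :
    p (Nat.nth (Bounces p) (j + 1)) = p (Nat.nth (Bounces p) j + 1) ∧
      q (Nat.nth (Bounces p) (j + 1)) = q (Nat.nth (Bounces p) j) +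
        (t (Nat.nth (Bounces p) (j + 1)) - t (Nat.nth (Bounces p) j)) • w := by
  have hlt := Nat.nth_strictMono h.infinite_bounces j.lt_succ_self
  obtain ⟨hp, hq⟩ := h.eq_of_forall_not_bounces (Nat.succ_le_of_lt hlt) (fun k hjk hk hb =>
    (Nat.le_nth_of_lt_nth_succ hk hb).not_gt hjk) hw
  refine ⟨hp, ?_⟩
  rw [hq, h.eq_add_smul (hp ▸ hw), add_assoc, ← add_smul, sub_add_sub_cancel']

theorem bounces_nth (h : IsBilliardPath H T m t q p) (j : ℕ) :
    Bounces (fun j => p (Nat.nth (Bounces p) j)) j := by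
  obtain ⟨w, hw⟩ := h.exists_normal (Nat.nth (Bounces p) (j + 1))
  rw [Bounces, (h.eq_nth_succ j hw).1]
  exact Nat.nth_mem_of_infinite h.infinite_bounces j

theorem comp_nth [DecidablePred (Bounces p)] (h : IsBilliardPath H T m t q p) :
    IsBilliardPath H T (Nat.count (Bounces p) m) (fun j => t (Nat.nth (Bounces p) j))
      (fun j => q (Nat.nth (Bounces p) j)) (fun j => p (Nat.nth (Bounces p) j)) where
  period_pos := h.count_period_pos
  q_mem _ := h.q_mem _
  p_mem _ := h.p_mem _
  q_periodic j := by rw [h.nth_add_count_period, h.q_periodic]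
  p_periodic j := by rw [h.nth_add_count_period, h.p_periodic]
  time_strictMono := h.time_strictMono.comp (Nat.nth_strictMono h.infinite_bounces)
  reflection j _ := by
    obtain ⟨w, hw⟩ := h.exists_normal (Nat.nth (Bounces p) (j + 1))
    rw [(h.eq_nth_succ j hw).1]
    exact h.reflection _ (Nat.nth_mem_of_infinite h.infinite_bounces j)
  motion j := by
    obtain ⟨w, hw⟩ := h.exists_normal (Nat.nth (Bounces p) (j + 1))
    exact ⟨w, hw, (h.eq_nth_succ j hw).2⟩

end IsBilliardPath

/-! ### Half-periods -/

/-- Every path in `H × T` that bounces at all indices returns to its antipode after time `2` and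
exactly `n` bounces, and takes at least time `4` to close up. -/
def HasHalfPeriod {ι : Type*} [Fintype ι] (H T : Set (ι → ℝ)) (n : ℕ) : Prop :=
  ∀ ⦃m t q p⦄, IsBilliardPath H T m t q p → (∀ i, Bounces p i) → ∀ i,
    t (i + n) = t i + 2 ∧ q (i + n) = -q i ∧ p (i + n) = -p i ∧ t i + 4 ≤ t (i + m)

namespace HasHalfPeriod

variable {ι : Type*} [Fintype ι] {H T : Set (ι → ℝ)} {n m : ℕ} {t : ℕ → ℝ} {q p : ℕ → ι → ℝ}

theorem nth_add (hn : HasHalfPeriod H T n) (h : IsBilliardPath H T m t q p) (j : ℕ) :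
    t (Nat.nth (Bounces p) (j + n)) = t (Nat.nth (Bounces p) j) + 2 ∧
      q (Nat.nth (Bounces p) (j + n)) = -q (Nat.nth (Bounces p) j) ∧
      p (Nat.nth (Bounces p) (j + n)) = -p (Nat.nth (Bounces p) j) := by
  classical
  obtain ⟨ht, hq, hp, -⟩ := hn h.comp_nth h.bounces_nth j
  exact ⟨ht, hq, hp⟩

theorem time_add_four_le (hn : HasHalfPeriod H T n) (h : IsBilliardPath H T m t q p) (i : ℕ) :
    t i + 4 ≤ t (i + m) := by
  classical
  have h4 := (hn h.comp_nth h.bounces_nth 0).2.2.2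
  simp only [h.nth_add_count_period, h.time_add_period (Nat.nth _ 0)] at h4
  linarith [h.time_add_period i]

theorem exists_time_eq_add_two (hn : HasHalfPeriod H T n) (h : IsBilliardPath H T m t q p) {i : ℕ}
    (hi : Bounces p i) : ∃ j, t j = t i + 2 := by
  classical
  refine ⟨_, (hn.nth_add h (Nat.count (Bounces p) i)).1.trans ?_⟩
  rw [Nat.nth_count hi]

section Count

variable [DecidablePred (Bounces p)]

theorem count_le_of_time_eq (hn : HasHalfPeriod H T n) (h : IsBilliardPath H T m t q p) {i j : ℕ}
    (ht : t j = t i + 2) : Nat.count (Bounces p) j ≤ Nat.count (Bounces p) i + n := by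
  rw [Nat.count_le_iff_le_nth h.infinite_bounces, ← h.time_strictMono.le_iff_le, ht,
    (hn.nth_add h _).1]
  gcongr
  exact h.time_strictMono.monotone (Nat.le_nth_count h.infinite_bounces i)

theorem lt_count_of_time_eq (hn : HasHalfPeriod H T n) (h : IsBilliardPath H T m t q p) {i j k : ℕ}
    (ht : t j = t i + 2) (hk : k < Nat.count (Bounces p) i) :
    k + n < Nat.count (Bounces p) j := by
  rw [Nat.lt_nth_iff_count_lt h.infinite_bounces, ← h.time_strictMono.lt_iff_lt, ht,
    (hn.nth_add h _).1]
  gcongr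
  exact h.time_strictMono (Nat.nth_lt_of_lt_count hk)

theorem count_eq_of_time_eq (hn : HasHalfPeriod H T n) (h : IsBilliardPath H T m t q p) {i j : ℕ}
    (ht : t j = t i + 2) : Nat.count (Bounces p) j = Nat.count (Bounces p) i + n := by
  have htm : t (j + m) = t (i + m) + 2 := by
    rw [h.time_add_period, h.time_add_period, ht, add_right_comm]
  have hle := hn.count_le_of_time_eq h ht
  have hlt := hn.lt_count_of_time_eq h (k := Nat.count (Bounces p) (i + m) - 1) htm
  rw [h.count_add_period, h.count_add_period] at hlt
  have := h.count_period_pos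
  omega

end Count

theorem eq_neg_of_time_eq (hn : HasHalfPeriod H T n) (h : IsBilliardPath H T m t q p)
    (hH : ∀ v ∈ H, -v ∈ H) {i j : ℕ} (ht : t j = t i + 2) : q j = -q i ∧ p j = -p i := by
  classical
  obtain ⟨w, hw⟩ := h.exists_normal (Nat.nth (Bounces p) (Nat.count (Bounces p) i))
  obtain ⟨hti, hqi, hpi⟩ := hn.nth_add h (Nat.count (Bounces p) i)
  rw [← hn.count_eq_of_time_eq h ht] at hti hqi hpi
  obtain ⟨hp, hq⟩ := h.eq_of_forall_not_bounces (Nat.le_nth_count h.infinite_bounces i)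
    (fun _ => h.not_bounces_of_lt_nth_count) hw
  obtain ⟨hp', hq'⟩ := h.eq_of_forall_not_bounces (Nat.le_nth_count h.infinite_bounces j)
    (fun _ => h.not_bounces_of_lt_nth_count) (w := -w) (hpi ▸ hw.neg hH)
  refine ⟨?_, by rw [← hp', hpi, hp]⟩
  rw [hqi, hq, hti, ht, add_sub_add_right_eq_sub, smul_neg, neg_add] at hq'
  exact (add_right_cancel hq').symm

end HasHalfPeriod

/-! ### Products -/

section Decomposition

variable {κ κ' ι : Type*} (e : κ ⊕ κ' ≃ ι)

/-- Restriction of a vector indexed by `ι` to the first summand of a decomposition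
`κ ⊕ κ' ≃ ι`. -/
def fstProj : (ι → ℝ) →ₗ[ℝ] (κ → ℝ) := LinearMap.funLeft ℝ ℝ (e ∘ Sum.inl)

/-- Restriction of a vector indexed by `ι` to the second summand of a decomposition
`κ ⊕ κ' ≃ ι`. -/
def sndProj : (ι → ℝ) →ₗ[ℝ] (κ' → ℝ) := LinearMap.funLeft ℝ ℝ (e ∘ Sum.inr)

/-- The vector with components `a` and `b` with respect to a decomposition `κ ⊕ κ' ≃ ι`. -/
def join (a : κ → ℝ) (b : κ' → ℝ) : ι → ℝ := Sum.elim a b ∘ e.symm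

@[simp]
theorem fstProj_join (a : κ → ℝ) (b : κ' → ℝ) : fstProj e (join e a b) = a := by
  ext i
  simp [fstProj, join, LinearMap.funLeft_apply]

@[simp]
theorem sndProj_join (a : κ → ℝ) (b : κ' → ℝ) : sndProj e (join e a b) = b := by
  ext i
  simp [sndProj, join, LinearMap.funLeft_apply]

variable {e} in
theorem ext_proj {x y : ι → ℝ} (hfst : fstProj e x = fstProj e y)
    (hsnd : sndProj e x = sndProj e y) : x = y := by
  funext i
  obtain ⟨i | i, rfl⟩ := e.surjective i
  exacts [congrFun hfst i, congrFun hsnd i]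

variable [Fintype κ] [Fintype κ'] [Fintype ι]

theorem dotProduct_eq_proj (x y : ι → ℝ) :
    x ⬝ᵥ y = fstProj e x ⬝ᵥ fstProj e y + sndProj e x ⬝ᵥ sndProj e y := by
  rw [← comp_equiv_dotProduct_comp_equiv x y e, dotProduct, Fintype.sum_sum_type]
  rfl

theorem join_dotProduct (x : ι → ℝ) (a : κ → ℝ) (b : κ' → ℝ) :
    join e a b ⬝ᵥ x = a ⬝ᵥ fstProj e x + b ⬝ᵥ sndProj e x := by
  rw [dotProduct_eq_proj e, fstProj_join, sndProj_join]

theorem dotProduct_join (x : ι → ℝ) (a : κ → ℝ) (b : κ' → ℝ) :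
    x ⬝ᵥ join e a b = fstProj e x ⬝ᵥ a + sndProj e x ⬝ᵥ b := by
  rw [dotProduct_eq_proj e, fstProj_join, sndProj_join]

theorem IsNormal.proj_dotProduct_add {H : Set (ι → ℝ)} {p w : ι → ℝ} (hw : IsNormal H p w) :
    fstProj e p ⬝ᵥ fstProj e w + sndProj e p ⬝ᵥ sndProj e w = 1 := by
  rw [← dotProduct_eq_proj, dotProduct_comm, hw.2.1]

end Decomposition

theorem count_add_count_compl {a b : ℕ → Prop} [DecidablePred a] [DecidablePred b]
    (hab : ∀ i, b i ↔ ¬ a i) (n : ℕ) : Nat.count a n + Nat.count b n = n := by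
  induction n with
  | zero => simp
  | succ n ih =>
    rw [Nat.count_succ, Nat.count_succ]
    by_cases hn : a n <;>
      simp only [hab, hn, not_true_eq_false, not_false_eq_true, if_true, if_false] <;> omega

section Product

variable {κ κ' ι : Type*} [Fintype κ] [Fintype κ'] [Fintype ι] [DecidableEq κ] [DecidableEq κ']

/-- With respect to a decomposition of the coordinates, `H` is the product of `K` and `L`, and `T`
is the polar of `H`; here `(K, M)` and `(L, R)` are polar pairs. -/
structure IsProd (e : κ ⊕ κ' ≃ ι) (K M : Set (κ → ℝ)) (L R : Set (κ' → ℝ))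
    (H T : Set (ι → ℝ)) : Prop where
  left : PolarPair K M
  right : PolarPair L R
  mem : ∀ x, x ∈ H ↔ fstProj e x ∈ K ∧ sndProj e x ∈ L
  mem_polar : ∀ p, p ∈ T ↔ ∀ q ∈ H, p ⬝ᵥ q ≤ 1

namespace IsProd

variable {e : κ ⊕ κ' ≃ ι} {K M : Set (κ → ℝ)} {L R : Set (κ' → ℝ)} {H T : Set (ι → ℝ)}

theorem swap (h : IsProd e K M L R H T) :
    IsProd ((Equiv.sumComm κ' κ).trans e) L R K M H T where
  left := h.right
  right := h.left
  mem x := (h.mem x).trans and_comm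
  mem_polar := h.mem_polar

theorem join_mem (h : IsProd e K M L R H T) {a : κ → ℝ} (ha : a ∈ K) {b : κ' → ℝ} (hb : b ∈ L) :
    join e a b ∈ H :=
  (h.mem _).2 (by rw [fstProj_join, sndProj_join]; exact ⟨ha, hb⟩)

theorem dotProduct_add_le_one (h : IsProd e K M L R H T) {p : ι → ℝ} (hp : p ∈ T) {a : κ → ℝ}
    (ha : a ∈ K) {b : κ' → ℝ} (hb : b ∈ L) : fstProj e p ⬝ᵥ a + sndProj e p ⬝ᵥ b ≤ 1 := by
  rw [← dotProduct_join]
  exact (h.mem_polar p).1 hp _ (h.join_mem ha hb)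

theorem mem_of_sndProj_eq_zero (h : IsProd e K M L R H T) {p : ι → ℝ} (hfst : fstProj e p ∈ M)
    (hsnd : sndProj e p = 0) : p ∈ T := by
  refine (h.mem_polar p).2 fun q hq => ?_
  rw [dotProduct_eq_proj e, hsnd, zero_dotProduct, add_zero]
  exact h.left.dotProduct_le_one hfst ((h.mem q).1 hq).1

theorem mem_of_fstProj_eq_zero (h : IsProd e K M L R H T) {p : ι → ℝ} (hfst : fstProj e p = 0)
    (hsnd : sndProj e p ∈ R) : p ∈ T :=
  h.swap.mem_of_sndProj_eq_zero hsnd hfst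

theorem join_zero_mem (h : IsProd e K M L R H T) {x : κ → ℝ} (hx : x ∈ M) : join e x 0 ∈ T :=
  h.mem_of_sndProj_eq_zero (by rwa [fstProj_join]) (sndProj_join e x 0)

theorem fstProj_mem (h : IsProd e K M L R H T) {q : ι → ℝ} (hq : ∀ p ∈ T, p ⬝ᵥ q ≤ 1) :
    fstProj e q ∈ K :=
  (h.left.mem_left _).2 fun x hx => by
    simpa [join_dotProduct] using hq _ (h.join_zero_mem hx)

theorem single_inl_mem [DecidableEq ι] (h : IsProd e K M L R H T) (i : κ) :
    Pi.single (e (Sum.inl i)) 1 ∈ H ∧ Pi.single (e (Sum.inl i)) 1 ∈ T := by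
  have hfst : fstProj e (Pi.single (e (Sum.inl i)) 1) = Pi.single i 1 := by
    ext j
    simp [fstProj, LinearMap.funLeft_apply, Pi.single_apply]
  have hsnd : sndProj e (Pi.single (e (Sum.inl i)) 1) = 0 := by
    ext j
    simp [sndProj, LinearMap.funLeft_apply]
  exact ⟨(h.mem _).2 ⟨hfst ▸ h.left.single_left i, hsnd ▸ h.right.zero_left⟩,
    h.mem_of_sndProj_eq_zero (hfst ▸ h.left.single_right i) hsnd⟩

theorem single_mem [DecidableEq ι] (h : IsProd e K M L R H T) (i : ι) :
    Pi.single i 1 ∈ H ∧ Pi.single i 1 ∈ T := by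
  obtain ⟨i | i, rfl⟩ := e.surjective i
  exacts [h.single_inl_mem i, h.swap.single_inl_mem i]

theorem polarPair [DecidableEq ι] (h : IsProd e K M L R H T) : PolarPair H T where
  nonempty := h.left.nonempty.map (e ∘ Sum.inl)
  mem_right := h.mem_polar
  mem_left q := ⟨fun hq p hp => (h.mem_polar p).1 hp q hq, fun hq =>
    (h.mem q).2 ⟨h.fstProj_mem hq, h.swap.fstProj_mem hq⟩⟩
  neg_left q hq := by
    rw [h.mem] at hq ⊢
    rw [map_neg, map_neg]
    exact ⟨h.left.neg_left _ hq.1, h.right.neg_left _ hq.2⟩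
  single_left i := (h.single_mem i).1
  single_right i := (h.single_mem i).2

theorem exists_mem_smul (h : IsProd e K M L R H T) {p : ι → ℝ} (hp : p ∈ T) :
    ∃ r : ℝ, 0 ≤ r ∧ r ≤ 1 ∧ fstProj e p ∈ r • M ∧ sndProj e p ∈ (1 - r) • R := by
  have hle : ∀ b ∈ L, 1 - sndProj e p ⬝ᵥ b ∈ upperBounds ((fstProj e p ⬝ᵥ ·) '' K) := by
    rintro b hb _ ⟨a, ha, rfl⟩
    exact le_sub_iff_add_le.2 (h.dotProduct_add_le_one hp ha hb)
  have hmem : (0 : ℝ) ∈ (fstProj e p ⬝ᵥ ·) '' K := ⟨0, h.left.zero_left, dotProduct_zero _⟩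
  obtain ⟨r, hr⟩ := Real.exists_isLUB ⟨0, hmem⟩ ⟨_, hle 0 h.right.zero_left⟩
  have hr1 : r ≤ 1 := by simpa using hr.2 (hle 0 h.right.zero_left)
  refine ⟨r, hr.1 hmem, hr1, ?_, ?_⟩
  · exact h.left.mem_smul_of_forall_dotProduct_le (hr.1 hmem) fun a ha => hr.1 ⟨a, ha, rfl⟩
  · exact h.right.mem_smul_of_forall_dotProduct_le (sub_nonneg.2 hr1) fun b hb =>
      le_sub_comm.1 (hr.2 (hle b hb))

theorem eq_convexHull (h : IsProd e K M L R H T) :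
    T = convexHull ℝ ({x | fstProj e x ∈ M ∧ sndProj e x = 0} ∪
      {x | fstProj e x = 0 ∧ sndProj e x ∈ R}) := by
  apply Set.Subset.antisymm
  · intro p hp
    obtain ⟨r, hr0, hr1, ⟨x, hx, hpx⟩, y, hy, hpy⟩ := h.exists_mem_smul hp
    have hp' : p = r • join e x 0 + (1 - r) • join e 0 y :=
      ext_proj (e := e) (by simp [← hpx]) (by simp [← hpy])
    rw [hp']
    refine convex_convexHull ℝ _ (subset_convexHull ℝ _ ?_) (subset_convexHull ℝ _ ?_)
      hr0 (sub_nonneg.2 hr1) (add_sub_cancel _ _)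
    · exact Or.inl ⟨by rwa [fstProj_join], sndProj_join e x 0⟩
    · exact Or.inr ⟨fstProj_join e 0 y, by rwa [sndProj_join]⟩
  · refine convexHull_min ?_ ?_
    · rintro x (⟨hfst, hsnd⟩ | ⟨hfst, hsnd⟩)
      exacts [h.mem_of_sndProj_eq_zero hfst hsnd, h.mem_of_fstProj_eq_zero hfst hsnd]
    · intro x hx y hy a b ha hb hab
      refine (h.mem_polar _).2 fun q hq => ?_
      have hxq := (h.mem_polar x).1 hx q hq
      have hyq := (h.mem_polar y).1 hy q hq
      rw [add_dotProduct, smul_dotProduct, smul_dotProduct]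
      exact convex_Iic (1 : ℝ) hxq hyq ha hb hab

theorem isNormal_fstProj_of_pos (h : IsProd e K M L R H T) {q u : ι → ℝ} (hq : q ∈ H)
    (hu : IsNormal T q u) (hpos : 0 < fstProj e u ⬝ᵥ fstProj e q) :
    sndProj e u = 0 ∧ IsNormal M (fstProj e q) (fstProj e u) := by
  obtain ⟨huT, huq, huniq⟩ := hu
  obtain ⟨hqK, hqL⟩ := (h.mem q).1 hq
  set c := fstProj e u ⬝ᵥ fstProj e q with hc
  have hjoin : ∀ v ∈ M, v ⬝ᵥ fstProj e q = 1 → join e v 0 = u := fun v hv hvq =>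
    huniq _ (h.join_zero_mem hv) (by rw [join_dotProduct, zero_dotProduct, add_zero, hvq])
  rw [dotProduct_eq_proj e] at huq
  obtain ⟨v, hv, hvu⟩ := h.left.mem_smul_of_forall_dotProduct_le hpos.le
    fun a ha => show fstProj e u ⬝ᵥ a ≤ c by linarith [h.dotProduct_add_le_one huT ha hqL]
  have hvq : v ⬝ᵥ fstProj e q = 1 := by
    rw [← hvu, smul_dotProduct, smul_eq_mul] at hc
    exact (mul_eq_left₀ hpos.ne').1 hc.symm
  have hfst : fstProj e u = v := by rw [← hjoin v hv hvq, fstProj_join]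
  refine ⟨by rw [← hjoin v hv hvq, sndProj_join], hfst ▸ ⟨hv, hvq, fun v' hv' hv'q => ?_⟩⟩
  rw [← fstProj_join e v' 0, hjoin v' hv' hv'q, hfst]

theorem isNormal_cases (h : IsProd e K M L R H T) {q u : ι → ℝ} (hq : q ∈ H)
    (hu : IsNormal T q u) :
    (sndProj e u = 0 ∧ IsNormal M (fstProj e q) (fstProj e u)) ∨
      (fstProj e u = 0 ∧ IsNormal R (sndProj e q) (sndProj e u)) := by
  by_cases hpos : 0 < fstProj e u ⬝ᵥ fstProj e q
  · exact Or.inl (h.isNormal_fstProj_of_pos hq hu hpos)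
  · have huq := hu.2.1
    rw [dotProduct_eq_proj e] at huq
    refine Or.inr (h.swap.isNormal_fstProj_of_pos hq hu ?_)
    change 0 < sndProj e u ⬝ᵥ sndProj e q
    linarith

theorem isGreatest_fstProj_dotProduct (h : IsProd e K M L R H T) {p w : ι → ℝ} (hp : p ∈ T)
    (hw : IsNormal H p w) :
    IsGreatest ((fstProj e p ⬝ᵥ ·) '' K) (fstProj e p ⬝ᵥ fstProj e w) := by
  obtain ⟨hwK, hwL⟩ := (h.mem w).1 hw.1
  refine ⟨⟨_, hwK, rfl⟩, ?_⟩
  rintro _ ⟨a, ha, rfl⟩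
  linarith [h.dotProduct_add_le_one hp ha hwL, hw.proj_dotProduct_add e]

theorem eq_fstProj_of_dotProduct_eq (h : IsProd e K M L R H T) {p w : ι → ℝ}
    (hw : IsNormal H p w) {a : κ → ℝ} (ha : a ∈ K)
    (hpa : fstProj e p ⬝ᵥ a = fstProj e p ⬝ᵥ fstProj e w) : a = fstProj e w := by
  have hmem := h.join_mem ha ((h.mem w).1 hw.1).2
  rw [← hw.2.2 _ hmem, fstProj_join]
  rw [dotProduct_comm, dotProduct_join, hpa, hw.proj_dotProduct_add e]

theorem fstProj_dotProduct_pos (h : IsProd e K M L R H T) {p w : ι → ℝ} (hp : p ∈ T)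
    (hw : IsNormal H p w) : 0 < fstProj e p ⬝ᵥ fstProj e w := by
  have hle {a : κ → ℝ} (ha : a ∈ K) : fstProj e p ⬝ᵥ a ≤ fstProj e p ⬝ᵥ fstProj e w :=
    (h.isGreatest_fstProj_dotProduct hp hw).2 ⟨a, ha, rfl⟩
  by_contra! hle0
  have hK : ∀ a ∈ K, a = fstProj e w := fun a ha => by
    refine h.eq_fstProj_of_dotProduct_eq hw ha ?_
    have hneg := hle (h.left.neg_left a ha)
    rw [dotProduct_neg] at hneg
    have hzero := hle h.left.zero_left
    rw [dotProduct_zero] at hzero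
    linarith [hle ha]
  obtain ⟨i⟩ := h.left.nonempty
  have hi := (hK _ (h.left.single_left i)).trans (hK 0 h.left.zero_left).symm
  simpa using congrFun hi i

theorem inv_smul_fstProj_mem (h : IsProd e K M L R H T) {p w : ι → ℝ} (hp : p ∈ T)
    (hw : IsNormal H p w) : (fstProj e p ⬝ᵥ fstProj e w)⁻¹ • fstProj e p ∈ M := by
  have hpos := h.fstProj_dotProduct_pos hp hw
  rw [← Set.mem_smul_set_iff_inv_smul_mem₀ hpos.ne']
  exact h.left.mem_smul_of_forall_dotProduct_le hpos.le fun a ha =>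
    (h.isGreatest_fstProj_dotProduct hp hw).2 ⟨a, ha, rfl⟩

theorem isNormal_inv_smul_fstProj (h : IsProd e K M L R H T) {p w : ι → ℝ} (hp : p ∈ T)
    (hw : IsNormal H p w) :
    IsNormal K ((fstProj e p ⬝ᵥ fstProj e w)⁻¹ • fstProj e p) (fstProj e w) := by
  have hpos := h.fstProj_dotProduct_pos hp hw
  refine ⟨((h.mem w).1 hw.1).1, ?_, fun v hv hvp => h.eq_fstProj_of_dotProduct_eq hw hv ?_⟩
  · rw [dotProduct_smul, dotProduct_comm (fstProj e w), smul_eq_mul, inv_mul_cancel₀ hpos.ne']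
  · rwa [dotProduct_smul, dotProduct_comm v, smul_eq_mul, inv_mul_eq_one₀ hpos.ne', eq_comm] at hvp

variable {m : ℕ} {t : ℕ → ℝ} {q p : ℕ → ι → ℝ}

theorem reflection_cases (h : IsProd e K M L R H T) (hpath : IsBilliardPath H T m t q p) {i : ℕ}
    (hi : Bounces p i) :
    (sndProj e (p (i + 1)) = sndProj e (p i) ∧
      ∃ c > (0 : ℝ), ∃ u, IsNormal M (fstProj e (q i)) u ∧
        fstProj e (p (i + 1)) = fstProj e (p i) - c • u) ∨
      fstProj e (p (i + 1)) = fstProj e (p i) := by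
  obtain ⟨c, hc, u, hu, hp⟩ := hpath.reflection i hi
  rcases h.isNormal_cases (hpath.q_mem i) hu with ⟨hsnd, hfst⟩ | ⟨hfst, -⟩
  · refine Or.inl ⟨?_, c, hc, _, hfst, by rw [hp, map_sub, map_smul]⟩
    rw [hp, map_sub, map_smul, hsnd, smul_zero, sub_zero]
  · exact Or.inr (by rw [hp, map_sub, map_smul, hfst, smul_zero, sub_zero])

theorem fstProj_eq_or_sndProj_eq (h : IsProd e K M L R H T) (hpath : IsBilliardPath H T m t q p)
    (i : ℕ) :
    fstProj e (p (i + 1)) = fstProj e (p i) ∨ sndProj e (p (i + 1)) = sndProj e (p i) := by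
  by_cases hi : Bounces p i
  · exact (h.reflection_cases hpath hi).symm.imp_right And.left
  · exact Or.inl (congrArg _ (not_not.1 hi))

theorem fstProj_dotProduct_congr (h : IsProd e K M L R H T) {p w p' w' : ι → ℝ} (hp : p ∈ T)
    (hw : IsNormal H p w) (hp' : p' ∈ T) (hw' : IsNormal H p' w')
    (hpp' : fstProj e p' = fstProj e p) :
    fstProj e p' ⬝ᵥ fstProj e w' = fstProj e p ⬝ᵥ fstProj e w := by
  have hgreatest := h.isGreatest_fstProj_dotProduct hp' hw'
  rw [hpp'] at hgreatest ⊢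
  exact hgreatest.unique (h.isGreatest_fstProj_dotProduct hp hw)

theorem exists_scale (h : IsProd e K M L R H T) (hpath : IsBilliardPath H T m t q p) :
    ∃ r > 0, ∀ i w, IsNormal H (p i) w → fstProj e (p i) ⬝ᵥ fstProj e w = r := by
  obtain ⟨w₀, hw₀⟩ := hpath.exists_normal 0
  refine ⟨_, h.fstProj_dotProduct_pos (hpath.p_mem 0) hw₀, fun i => ?_⟩
  induction i with
  | zero => intro w hw; rw [hw.unique hw₀]
  | succ i ih =>
    intro w' hw'
    obtain ⟨w, hw⟩ := hpath.exists_normal i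
    rw [← ih w hw]
    rcases h.fstProj_eq_or_sndProj_eq hpath i with hfst | hsnd
    · exact h.fstProj_dotProduct_congr (hpath.p_mem _) hw (hpath.p_mem _) hw' hfst
    · have hsnd' : sndProj e (p (i + 1)) ⬝ᵥ sndProj e w' = sndProj e (p i) ⬝ᵥ sndProj e w :=
        h.swap.fstProj_dotProduct_congr (hpath.p_mem _) hw (hpath.p_mem _) hw' hsnd
      linarith [hw.proj_dotProduct_add e, hw'.proj_dotProduct_add e]

theorem exists_isBilliardPath_fstProj (h : IsProd e K M L R H T)
    (hpath : IsBilliardPath H T m t q p) :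
    ∃ r > (0 : ℝ), IsBilliardPath K M m t (fun i => fstProj e (q i))
      (fun i => r • fstProj e (p i)) := by
  obtain ⟨r, hr, hscale⟩ := h.exists_scale hpath
  refine ⟨r⁻¹, inv_pos.2 hr, hpath.period_pos, fun i => ((h.mem _).1 (hpath.q_mem i)).1,
    fun i => ?_, fun i => by rw [hpath.q_periodic], fun i => by rw [hpath.p_periodic],
    hpath.time_strictMono, fun i hi => ?_, fun i => ?_⟩
  · obtain ⟨w, hw⟩ := hpath.exists_normal i
    rw [← hscale i w hw]
    exact h.inv_smul_fstProj_mem (hpath.p_mem i) hw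
  · have hne : fstProj e (p (i + 1)) ≠ fstProj e (p i) := fun heq => hi (congrArg (r⁻¹ • ·) heq)
    obtain ⟨-, c, hc, u, hu, hp⟩ :=
      (h.reflection_cases hpath fun heq => hne (congrArg _ heq)).resolve_right hne
    exact ⟨r⁻¹ * c, mul_pos (inv_pos.2 hr) hc, u, hu, by rw [hp, smul_sub, smul_smul]⟩
  · obtain ⟨w, hw, hq⟩ := hpath.motion i
    refine ⟨fstProj e w, ?_, by rw [hq, map_add, map_smul]⟩
    rw [← hscale _ w hw]
    exact h.isNormal_inv_smul_fstProj (hpath.p_mem _) hw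

theorem exists_isBilliardPath_sndProj (h : IsProd e K M L R H T)
    (hpath : IsBilliardPath H T m t q p) :
    ∃ r > (0 : ℝ), IsBilliardPath L R m t (fun i => sndProj e (q i))
      (fun i => r • sndProj e (p i)) :=
  h.swap.exists_isBilliardPath_fstProj hpath

theorem bounces_sndProj_iff (h : IsProd e K M L R H T) (hpath : IsBilliardPath H T m t q p)
    {i : ℕ} (hi : Bounces p i) :
    Bounces (fun i => sndProj e (p i)) i ↔ ¬ Bounces (fun i => fstProj e (p i)) i :=
  ⟨fun hsnd hfst => (h.fstProj_eq_or_sndProj_eq hpath i).elim hfst hsnd,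
    fun hfst hsnd => hi (ext_proj (not_not.1 hfst) hsnd)⟩

theorem hasHalfPeriod {k l : ℕ} (h : IsProd e K M L R H T) (hk : HasHalfPeriod K M k)
    (hl : HasHalfPeriod L R l) : HasHalfPeriod H T (k + l) := by
  classical
  intro m t q p hpath hb i
  obtain ⟨r, hr, hfst⟩ := h.exists_isBilliardPath_fstProj hpath
  obtain ⟨s, hs, hsnd⟩ := h.exists_isBilliardPath_sndProj hpath
  have hcompl (i : ℕ) := ((bounces_smul hs.ne' i).trans (h.bounces_sndProj_iff hpath (hb i))).trans
    (not_congr (bounces_smul hr.ne' i).symm)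
  obtain ⟨j, hj⟩ : ∃ j, t j = t i + 2 := by
    by_cases hi : Bounces (fun i => r • fstProj e (p i)) i
    · exact hk.exists_time_eq_add_two hfst hi
    · exact hl.exists_time_eq_add_two hsnd ((hcompl i).2 hi)
  obtain rfl : j = i + (k + l) := by
    have := count_add_count_compl hcompl i
    have := count_add_count_compl hcompl j
    have := hk.count_eq_of_time_eq hfst hj
    have := hl.count_eq_of_time_eq hsnd hj
    omega
  obtain ⟨hq₁, hp₁⟩ := hk.eq_neg_of_time_eq hfst h.left.neg_left hj
  obtain ⟨hq₂, hp₂⟩ := hl.eq_neg_of_time_eq hsnd h.right.neg_left hj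
  rw [← smul_neg, ← map_neg] at hp₁ hp₂
  rw [← map_neg] at hq₁ hq₂
  exact ⟨hj, ext_proj hq₁ hq₂, ext_proj (smul_right_injective _ hr.ne' hp₁)
    (smul_right_injective _ hs.ne' hp₂), hk.time_add_four_le hfst i⟩

end IsProd

end Product

/-! ### Exchanging positions and momenta -/

theorem IsBilliardPath.dual_time_sub {ι : Type*} [Fintype ι] {H T : Set (ι → ℝ)} {m : ℕ}
    {t : ℕ → ℝ} {q p : ℕ → ι → ℝ} (h : IsBilliardPath H T m t q p) (i : ℕ) :
    (t (i + 1) - p (i + 1) ⬝ᵥ q (i + 1)) - (t i - p i ⬝ᵥ q i) = (p i - p (i + 1)) ⬝ᵥ q i := by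
  have ht := h.time_sub i
  rw [sub_dotProduct, dotProduct_comm, dotProduct_comm (q i)] at ht
  rw [sub_dotProduct]
  linarith

/-- The momenta of a path move in `T` with normals in `-H`, on a clock that differs from the
original one by the generating function `⟨p, q⟩`. -/
theorem IsBilliardPath.dual {ι : Type*} [Fintype ι] [DecidableEq ι] {H T : Set (ι → ℝ)} {m : ℕ}
    {t : ℕ → ℝ} {q p : ℕ → ι → ℝ} (h : IsBilliardPath H T m t q p) (hHT : PolarPair H T)
    (hb : ∀ i, Bounces p i) :
    IsBilliardPath T H m (fun i => t (i + 1) - p (i + 1) ⬝ᵥ q (i + 1)) (fun i => p (i + 1))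
      (fun i => -q i) := by
  have hstep (i : ℕ) : ∃ c > (0 : ℝ), ∃ u, IsNormal T (q i) u ∧ p (i + 1) = p i - c • u ∧
      (t (i + 1) - p (i + 1) ⬝ᵥ q (i + 1)) - (t i - p i ⬝ᵥ q i) = c := by
    obtain ⟨c, hc, u, hu, hp⟩ := h.reflection i (hb i)
    refine ⟨c, hc, u, hu, hp, ?_⟩
    rw [h.dual_time_sub, hp, sub_sub_cancel, smul_dotProduct, hu.2.1, smul_eq_mul, mul_one]
  refine ⟨h.period_pos, fun i => h.p_mem _, fun i => hHT.neg_left _ (h.q_mem i), fun i => ?_,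
    fun i => by rw [h.q_periodic], strictMono_nat_of_lt_succ fun i => ?_, fun i _ => ?_,
    fun i => ?_⟩
  · rw [add_right_comm, h.p_periodic]
  · obtain ⟨c, hc, -, -, -, ht⟩ := hstep (i + 1)
    exact sub_pos.1 (ht ▸ hc)
  · obtain ⟨w, hw, hq⟩ := h.motion i
    exact ⟨_, sub_pos.2 (h.time_strictMono i.lt_succ_self), w, hw, by rw [hq, neg_add']⟩
  · obtain ⟨c, -, u, hu, hp, ht⟩ := hstep (i + 1)
    exact ⟨-u, hu.neg hHT.neg_right, by rw [ht, hp, smul_neg, sub_eq_add_neg]⟩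

theorem IsBilliardPath.position_succ_ne {ι : Type*} [Fintype ι] {H T : Set (ι → ℝ)} {m : ℕ}
    {t : ℕ → ℝ} {q p : ℕ → ι → ℝ} (h : IsBilliardPath H T m t q p) (i : ℕ) :
    q (i + 1) ≠ q i := fun hq => by
  have ht := h.time_sub i
  rw [hq, sub_self, zero_dotProduct] at ht
  exact (h.time_strictMono i.lt_succ_self).ne' (sub_eq_zero.1 ht)

theorem HasHalfPeriod.symm {ι : Type*} [Fintype ι] [DecidableEq ι] {H T : Set (ι → ℝ)} {n : ℕ}
    (hn : HasHalfPeriod T H n) (hHT : PolarPair H T) : HasHalfPeriod H T n := by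
  intro m t q p h hb i
  have hdual := hn (h.dual hHT hb) fun i => neg_injective.ne (h.position_succ_ne i)
  have hq (i : ℕ) : q (i + n) = -q i := neg_injective (hdual i).2.2.1
  obtain ⟨j, hj⟩ : ∃ j, i + m = j + 1 := Nat.exists_eq_add_one.2 (by linarith [h.period_pos])
  obtain ⟨htj, hpj, -, ht4⟩ := hdual j
  simp only [add_right_comm j _ 1, ← hj] at htj hpj ht4
  have hp : p (i + n) = -p i := by
    rwa [add_right_comm, h.p_periodic, h.p_periodic] at hpj
  refine ⟨?_, hq i, hp, ?_⟩
  · rw [add_right_comm, h.p_periodic, h.q_periodic, h.p_periodic, h.q_periodic, hp, hq,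
      neg_dotProduct_neg, h.time_add_period, h.time_add_period i] at htj
    linarith
  · rw [h.p_periodic (i + m), h.q_periodic (i + m), h.time_add_period (i + m)] at ht4
    linarith [h.time_add_period i]

/-! ### The segment -/

theorem eq_and_eq_neg_of_eq_sub_mul {x y z c : ℝ} (hx : |x| = 1) (hy : |y| = 1) (hz : |z| = 1)
    (hc : 0 < c) (h : y = x - c * z) : x = z ∧ y = -z ∧ c = 2 := by
  rcases eq_or_eq_neg_of_abs_eq hx with rfl | rfl <;>
    rcases eq_or_eq_neg_of_abs_eq hy with rfl | rfl <;>
    rcases eq_or_eq_neg_of_abs_eq hz with rfl | rfl <;>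
    first
      | (exfalso; linarith)
      | exact ⟨by norm_num, by norm_num, by linarith⟩

section Segment

variable {ι : Type*} [Fintype ι] [DecidableEq ι] [Unique ι] {H T : Set (ι → ℝ)}

theorem PolarPair.eq_of_isNormal (hHT : PolarPair H T) {q u : ι → ℝ} (hq : q ∈ H)
    (hu : IsNormal T q u) : u = q ∧ |q default| = 1 := by
  have huq : u default * q default = 1 := by simpa [dotProduct] using hu.2.1
  have hq1 := abs_le.1 (hHT.abs_apply_le_one hq default)
  have hu1 := abs_le.1 (hHT.symm.abs_apply_le_one hu.1 default)
  have heq : u default = q default := by nlinarith [sq_nonneg (u default - q default)]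
  refine ⟨funext fun i => by rw [Unique.eq_default i, heq], ?_⟩
  rw [abs_eq zero_le_one, ← mul_self_eq_one_iff, ← huq, heq]

theorem IsBilliardPath.succ_eq_neg (hHT : PolarPair H T) {m : ℕ} {t : ℕ → ℝ} {q p : ℕ → ι → ℝ}
    (h : IsBilliardPath H T m t q p) (hb : ∀ i, Bounces p i) (i : ℕ) :
    t (i + 1) = t i + 2 ∧ q (i + 1) = -q i ∧ p (i + 1) = -p i := by
  have hqabs (i : ℕ) : |q i default| = 1 := by
    obtain ⟨c, -, u, hu, -⟩ := h.reflection i (hb i)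
    exact (hHT.eq_of_isNormal (h.q_mem i) hu).2
  have hpabs (i : ℕ) : |p i default| = 1 := by
    obtain ⟨w, hw⟩ := h.exists_normal i
    exact (hHT.symm.eq_of_isNormal (h.p_mem i) hw).2
  obtain ⟨c, hc, u, hu, hp⟩ := h.reflection i (hb i)
  obtain ⟨w, hw, hq⟩ := h.motion i
  obtain rfl := (hHT.eq_of_isNormal (h.q_mem i) hu).1
  obtain rfl := (hHT.symm.eq_of_isNormal (h.p_mem (i + 1)) hw).1
  obtain ⟨hpi, hpi', -⟩ := eq_and_eq_neg_of_eq_sub_mul (hpabs i) (hpabs (i + 1)) (hqabs i) hc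
    (congrFun hp default)
  obtain ⟨-, hqi, ht⟩ := eq_and_eq_neg_of_eq_sub_mul (hqabs i) (hqabs (i + 1))
    ((abs_neg _).trans (hpabs (i + 1))) (sub_pos.2 (h.time_strictMono i.lt_succ_self))
    ((congrFun hq default).trans (by simp))
  refine ⟨by linarith, funext fun j => ?_, funext fun j => ?_⟩ <;>
    rw [Unique.eq_default j, Pi.neg_apply]
  · rw [hqi, neg_neg, hpi']
  · rw [hpi', hpi]

theorem PolarPair.hasHalfPeriod_one (hHT : PolarPair H T) : HasHalfPeriod H T 1 := by
  intro m t q p h hb i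
  have hstep := h.succ_eq_neg hHT hb
  have hm : m ≠ 1 := by
    rintro rfl
    have hself := (hstep i).2.1
    obtain ⟨c, -, u, hu, -⟩ := h.reflection i (hb i)
    rw [h.q_periodic, self_eq_neg] at hself
    simpa [hself] using hu.2.1
  have ht4 : t i + 4 = t (i + 2) := by linarith [(hstep i).1, (hstep (i + 1)).1]
  refine ⟨(hstep i).1, (hstep i).2.1, (hstep i).2.2, ht4 ▸ h.time_strictMono.monotone ?_⟩
  have := h.period_pos
  omega

end Segment

/-! ### Hanner polytopes -/

theorem PolarPair.polarSet_left {n : ℕ} {H T : Set (Fin n → ℝ)} (h : PolarPair H T) :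
    polarSet H = T :=
  Set.ext fun p => (h.mem_right p).symm

theorem mem_polarSet_segment (p : Fin 1 → ℝ) :
    p ∈ polarSet {x : Fin 1 → ℝ | |x 0| ≤ 1} ↔ |p 0| ≤ 1 := by
  simp only [polarSet, pairing, Set.mem_ofPred_eq, Fin.sum_univ_one]
  refine ⟨fun h => abs_le'.2 ⟨?_, ?_⟩, fun h q hq => ?_⟩
  · simpa using h 1 (by simp)
  · simpa using h (-1) (by simp)
  · refine (le_abs_self _).trans ?_
    rw [abs_mul]
    exact mul_le_one₀ h (abs_nonneg _) hq

theorem polarPair_segment :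
    PolarPair {x : Fin 1 → ℝ | |x 0| ≤ 1} (polarSet {x : Fin 1 → ℝ | |x 0| ≤ 1}) where
  nonempty := ⟨0⟩
  mem_right _ := Iff.rfl
  mem_left q := by
    refine (mem_polarSet_segment q).symm.trans (forall_congr' fun p => ?_)
    rw [mem_polarSet_segment, dotProduct_comm]
    rfl
  neg_left q hq := by simpa using hq
  single_left i := by simp [Fin.fin_one_eq_zero i]
  single_right i := by simp [mem_polarSet_segment, Fin.fin_one_eq_zero i]

theorem isProd_sumInfty {k l : ℕ} {K M : Set (Fin k → ℝ)} {L R : Set (Fin l → ℝ)}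
    (hK : PolarPair K M) (hL : PolarPair L R) :
    IsProd finSumFinEquiv K M L R (sumInfty K L) (sumOne M R) := by
  have h : IsProd finSumFinEquiv K M L R (sumInfty K L) (polarSet (sumInfty K L)) :=
    ⟨hK, hL, fun _ => Iff.rfl, fun _ => Iff.rfl⟩
  have hpolar : polarSet (sumInfty K L) = sumOne M R := h.eq_convexHull
  rwa [hpolar] at h

namespace IsHanner

variable {n : ℕ} {H : Set (Fin n → ℝ)}

theorem polarPair (hH : IsHanner n H) : PolarPair H (polarSet H) := by
  induction hH with
  | segment => exact polarPair_segment
  | inftySum _ _ hK hL =>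
    have h := (isProd_sumInfty hK hL).polarPair
    rwa [h.polarSet_left]
  | oneSum _ _ hK hL =>
    have h := (isProd_sumInfty hK.symm hL.symm).polarPair.symm
    rwa [h.polarSet_left]

theorem hasHalfPeriod (hH : IsHanner n H) : HasHalfPeriod H (polarSet H) n := by
  induction hH with
  | segment => exact polarPair_segment.hasHalfPeriod_one
  | inftySum hK hL ihK ihL =>
    have h := isProd_sumInfty hK.polarPair hL.polarPair
    rw [h.polarPair.polarSet_left]
    exact h.hasHalfPeriod ihK ihL
  | oneSum hK hL ihK ihL =>
    have h := isProd_sumInfty hK.polarPair.symm hL.polarPair.symm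
    rw [h.polarPair.symm.polarSet_left]
    exact (h.hasHalfPeriod (ihK.symm hK.polarPair.symm)
      (ihL.symm hL.polarPair.symm)).symm h.polarPair.symm

end IsHanner

/-! ### Classical trajectories -/

section Classical

variable {n : ℕ} {H T : Set (Fin n → ℝ)}

theorem PolarPair.isNormal (h : PolarPair H T) {q u : Fin n → ℝ} (hu : IsUniqueNormal H q u) :
    IsNormal T q u :=
  h.polarSet_left ▸ hu

theorem PolarPair.suppFn_smul (h : PolarPair H T) {p w : Fin n → ℝ} (hp : p ∈ T)
    (hw : IsNormal H p w) {c : ℝ} (hc : 0 ≤ c) : suppFn T (c • w) = c := by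
  refine IsGreatest.csSup_eq ⟨⟨p, hp, ?_⟩, ?_⟩
  · change p ⬝ᵥ c • w = c
    rw [dotProduct_smul, dotProduct_comm, hw.2.1, smul_eq_mul, mul_one]
  · rintro _ ⟨v, hv, rfl⟩
    change v ⬝ᵥ c • w ≤ c
    rw [dotProduct_smul, smul_eq_mul]
    exact mul_le_of_le_one_right hc (h.dotProduct_le_one hv hw.1)

/-- The time at which a classical trajectory reaches `q i` when it is traversed with the outer
normals as velocities; it agrees with the length in the norm `‖·‖_{H°}`. -/
def ClassicalTraj.time (τ : ClassicalTraj n H T) (i : ℕ) : ℝ := ∑ j ∈ Finset.range i, τ.mu j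

theorem ClassicalTraj.isBilliardPath (τ : ClassicalTraj n H T) (h : PolarPair H T) :
    IsBilliardPath H T τ.m τ.time τ.q τ.p where
  period_pos := τ.m_pos
  q_mem i := h.isClosed_left.frontier_subset (τ.q_mem i)
  p_mem i := h.symm.isClosed_left.frontier_subset (τ.p_mem i)
  q_periodic := τ.q_periodic
  p_periodic := τ.p_periodic
  time_strictMono := strictMono_nat_of_lt_succ fun i => by
    rw [ClassicalTraj.time, ClassicalTraj.time, Finset.sum_range_succ]
    exact lt_add_of_pos_right _ (τ.mu_pos i)
  reflection i _ := ⟨τ.lam i, τ.lam_pos i, τ.nq i, h.isNormal (τ.nq_spec i), by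
    rw [sub_eq_iff_eq_add'.1 (τ.reflection i), neg_smul, sub_eq_add_neg]⟩
  motion i := ⟨τ.np (i + 1), h.symm.isNormal (τ.np_spec (i + 1)), by
    rw [sub_eq_iff_eq_add'.1 (τ.motion i), ClassicalTraj.time, ClassicalTraj.time,
      Finset.sum_range_succ_sub_sum]⟩

theorem ClassicalTraj.bounces (τ : ClassicalTraj n H T) (i : ℕ) : Bounces τ.p i := fun hp => by
  have hsmul := τ.reflection i
  rw [hp, sub_self, eq_comm, smul_eq_zero_iff_right (neg_ne_zero.2 (τ.lam_pos i).ne')] at hsmul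
  simpa [hsmul, pairing] using (τ.nq_spec i).2.1

theorem ClassicalTraj.length_eq_time (τ : ClassicalTraj n H T) (h : PolarPair H T) :
    τ.length = τ.time τ.m := by
  refine Finset.sum_congr rfl fun i _ => ?_
  rw [τ.motion, h.suppFn_smul ((τ.isBilliardPath h).p_mem (i + 1))
    (h.symm.isNormal (τ.np_spec (i + 1))) (τ.mu_pos i).le]

end Classical

end Billiard

open Billiard in
/-- Any simple classical closed billiard trajectory in a Hanner polytope `H ⊂ ℝⁿ` with
geometry given by its polar `H°` (1) has length 4, (2) is `2n`-periodic, and (3) is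
centrally symmetric together with its momentum trajectory: `q (i+n) = −q i` and
`p (i+n) = −p i`. -/
theorem hanner_simple_trajectory (n : ℕ) (H : Set (Fin n → ℝ)) (hH : IsHanner n H)
    (τ : ClassicalTraj n H (polarSet H)) (hsimple : τ.IsSimple) :
    τ.length = 4 ∧ τ.m = 2 * n ∧
      (∀ i, τ.q (i + n) = -τ.q i) ∧ (∀ i, τ.p (i + n) = -τ.p i) := by
  have hpair := hH.polarPair
  have hpath := τ.isBilliardPath hpair
  have hhalf := hH.hasHalfPeriod hpath τ.bounces
  have hq (i : ℕ) : τ.q (i + n) = -τ.q i := (hhalf i).2.1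
  have hp (i : ℕ) : τ.p (i + n) = -τ.p i := (hhalf i).2.2.1
  have htime (i : ℕ) : τ.time (i + 2 * n) = τ.time i + 4 := by
    rw [two_mul, ← add_assoc, (hhalf _).1, (hhalf i).1]
    ring
  have hle : 2 * n ≤ τ.m := by
    rw [← Nat.add_le_add_iff_left (n := 0), ← hpath.time_strictMono.le_iff_le, htime]
    exact (hhalf 0).2.2.2
  have hn : 0 < n := Fin.pos_iff_nonempty.2 hpair.nonempty
  have hm : τ.m = 2 * n := by
    refine hle.antisymm' (not_lt.1 fun hlt => hsimple (2 * n) (by omega) hlt fun i => ?_)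
    rw [two_mul, ← add_assoc, hq, hq, hp, hp, neg_neg, neg_neg]
    exact ⟨rfl, rfl⟩
  refine ⟨?_, hm, hq, hp⟩
  rw [τ.length_eq_time hpair, hm, ← zero_add (2 * n), htime]
  simp [ClassicalTraj.time]
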